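/- Let λ ∈ 𝒫_C with distinct even parts 2x_1 > … > 2x_ℓ of multiplicities r_1, …, r_ℓ, and set B_λ = {0, 2x_1, …, 2x_ℓ}. For every even NCP 𝓛 of B_λ there exists an admissible domino tableau T of type C and shape λ such that the partition of B_λ into the fibers of b_T over the open clusters of T is exactly 𝓛. -/

import Mathlib

/-- A domino in the plane (rows and columns numbered from 1, matrix style):
`H i j` is the horizontal domino with boxes `(i,j)` and `(i,j+1)`;
`V i j` is the vertical domino with boxes `(i,j)` and `(i+1,j)`. -/
inductive Domino : Type
  | H : ℕ → ℕ → Domino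
  | V : ℕ → ℕ → Domino
deriving DecidableEq

/-- The two boxes of a domino. -/
def Domino.boxes : Domino → Finset (ℕ × ℕ)
  | .H i j => {(i, j), (i, j + 1)}
  | .V i j => {(i, j), (i + 1, j)}

/-- The boxes of a domino have row and column indices `≥ 1`. -/
def Domino.valid : Domino → Prop
  | .H i j => 1 ≤ i ∧ 1 ≤ j
  | .V i j => 1 ≤ i ∧ 1 ≤ j

/-- A domino of type `(I+)` (type C): vertical, lying in an even column. -/
def Domino.IsIPlus : Domino → Prop
  | .H _ _ => False
  | .V _ j => j % 2 = 0

/-- A domino tableau with `n` dominoes is encoded as a list of dominoes **in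
decreasing order of labels**: the head has label `n` and the last element has
label `1`; `T^i` (dominoes with labels `≤ i`) is `T.drop (n - i)`. -/
def boxesOf (T : List Domino) : Finset (ℕ × ℕ) :=
  T.foldr (fun d s => d.boxes ∪ s) ∅

/-- The length of row `i` of the tableau `T`. -/
def rowLen (T : List Domino) (i : ℕ) : ℕ :=
  ((boxesOf T).filter (fun p => p.1 = i)).card

/-- The shape of `T`: the multiset of (positive) row lengths, i.e. the partition
whose Young diagram is the set of boxes of `T`. -/
def shapeOf (T : List Domino) : Multiset ℕ :=
  ((boxesOf T).image Prod.fst).val.map (rowLen T)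

/-- The set of parts of the shape of `T`. -/
def partsFinset (T : List Domino) : Finset ℕ :=
  ((boxesOf T).image Prod.fst).image (rowLen T)

/-- The label of the box `p` in `T` (the head of `T` has the largest label
`T.length`; boxes outside `T` get the junk value `0`). -/
def labelOf : List Domino → ℕ × ℕ → ℕ
  | [], _ => 0
  | d :: rest, p => if p ∈ d.boxes then rest.length + 1 else labelOf rest p

/-- Van Leeuwen's clusters of an (admissible, type C) domino tableau `T`, by induction
on the number of dominoes. `(clusterData T).1` is the set of clusters, each cluster
being the `Finset` of the labels of its dominoes, and `(clusterData T).2` is the map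
`b_T`, sending each even number `2i` (an element of `B_λ = {0} ∪ {even parts}`) to a
cluster. If `T = [d]`, there is one cluster and `b_T` is constant. For `T = d :: rest`
with `d` the domino of maximal label `n`: if `d` is of type (N) in columns `2i−1, 2i`,
the clusters `b'(2i−2)`, `d` and (when `2i` is a part of the shape of `rest`) `b'(2i)`
merge into a new cluster; if `d` is of type (I+) in column `2i`, `d` and (when `2i` is
a part) `b'(2i)` merge; if `d` is of type (I−) in column `2i+1`, `d` and `b'(2i)`
merge. The untouched clusters and values of `b'` persist, and all members of `B_λ`
previously sent to a merged cluster (as well as `2i`, in the (N) and (I+) cases) are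
sent to the new cluster. -/
def clusterData : List Domino → Finset (Finset ℕ) × (ℕ → Finset ℕ)
  | [] => (∅, fun _ => ∅)
  | [_] => ({({1} : Finset ℕ)}, fun _ => ({1} : Finset ℕ))
  | d :: rest =>
      let P := clusterData rest
      let n := rest.length + 1
      match d with
      | .H _ j =>
          if j % 2 = 1 then
            -- type (N), columns j = 2i−1 and c = 2i
            let c := j + 1
            let olds : Finset (Finset ℕ) :=
              if c ∈ partsFinset rest then {P.2 (c - 2), P.2 c} else {P.2 (c - 2)}
            let newC : Finset ℕ :=
              insert n (if c ∈ partsFinset rest then P.2 (c - 2) ∪ P.2 c else P.2 (c - 2))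
            ((P.1 \ olds) ∪ {newC},
             fun m => if P.2 m ∈ olds ∨ m = c then newC else P.2 m)
          else P
      | .V _ j =>
          if j % 2 = 0 then
            -- type (I+), column c = 2i
            let c := j
            if c ∈ partsFinset rest then
              let newC : Finset ℕ := insert n (P.2 c)
              ((P.1 \ {P.2 c}) ∪ {newC},
               fun m => if P.2 m = P.2 c ∨ m = c then newC else P.2 m)
            else
              let newC : Finset ℕ := ({n} : Finset ℕ)
              (P.1 ∪ {newC}, fun m => if m = c then newC else P.2 m)
          else
            -- type (I−), column j = 2i+1, merge with b'(2i)
            let c := j - 1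
            let newC : Finset ℕ := insert n (P.2 c)
            ((P.1 \ {P.2 c}) ∪ {newC},
             fun m => if P.2 m = P.2 c then newC else P.2 m)

/-- The set of boxes is a Young diagram (rows/columns from 1, left- and top-justified). -/
def IsYoungDiagramSet (S : Finset (ℕ × ℕ)) : Prop :=
  (∀ p ∈ S, 1 ≤ p.1 ∧ 1 ≤ p.2) ∧
  (∀ i j, (i, j + 1) ∈ S → 1 ≤ j → (i, j) ∈ S) ∧
  (∀ i j, (i + 1, j) ∈ S → 1 ≤ i → (i, j) ∈ S)

/-- `T` (a list of dominoes in decreasing label order) is a standard domino tableau: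
the dominoes are pairwise disjoint, their union is a Young diagram, and the labels
weakly increase along rows and columns. -/
def IsStandardDT (T : List Domino) : Prop :=
  (∀ d ∈ T, d.valid) ∧
  T.Pairwise (fun d d' => Disjoint d.boxes d'.boxes) ∧
  IsYoungDiagramSet (boxesOf T) ∧
  (∀ i j, (i, j) ∈ boxesOf T → (i + 1, j) ∈ boxesOf T →
    labelOf T (i, j) ≤ labelOf T (i + 1, j)) ∧
  (∀ i j, (i, j) ∈ boxesOf T → (i, j + 1) ∈ boxesOf T →
    labelOf T (i, j) ≤ labelOf T (i, j + 1))

/-- A partition is of type C: it is a partition of an even number in which every odd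
part has even multiplicity. -/
def IsTypeCShape (μ : Multiset ℕ) : Prop :=
  Even μ.sum ∧ ∀ m, Odd m → Even (μ.count m)

/-- `T` is an admissible domino tableau of type C: it is standard, and the shape of
every `T^i` (here: of every suffix of the list) is of type C. -/
def IsAdmissibleC (T : List Domino) : Prop :=
  IsStandardDT T ∧ ∀ k, IsTypeCShape (shapeOf (T.drop k))

/-- `P` is a partition of the finite set `B ⊆ ℕ` into nonempty blocks. -/
def IsPartitionOf (B : Finset ℕ) (P : Finset (Finset ℕ)) : Prop :=
  (∀ L ∈ P, L.Nonempty) ∧ (∀ L ∈ P, L ⊆ B) ∧ ∀ b ∈ B, ∃! L, L ∈ P ∧ b ∈ L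

/-- The noncrossing condition on the blocks. -/
def PairwiseNoncrossing (P : Finset (Finset ℕ)) : Prop :=
  ∀ L ∈ P, ∀ L' ∈ P, L ≠ L' →
    ∀ a ∈ L, ∀ b ∈ L, ∀ c ∈ L', ∀ d ∈ L', a ≤ b → c ≤ d →
      Finset.Icc a b ∩ Finset.Icc c d = ∅ ∨
      Finset.Icc a b ⊆ Finset.Icc c d ∨ Finset.Icc c d ⊆ Finset.Icc a b

/-- A noncrossing partition (NCP) of the finite set `B ⊆ ℕ`. -/
def IsNCP (B : Finset ℕ) (P : Finset (Finset ℕ)) : Prop :=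
  IsPartitionOf B P ∧ PairwiseNoncrossing P

/-- `B_λ = {0, 2x₁, …, 2x_ℓ}` (indices `1, …, ℓ`). -/
def Blam (ℓ : ℕ) (x : ℕ → ℕ) : Finset ℕ :=
  insert 0 ((Finset.Icc 1 ℓ).image (fun i => 2 * x i))

/-- An even NCP of `B_λ`: an NCP such that every block `L` not containing `0` has
`r(L) = Σ_{j : 2x_j ∈ L} r_j` even (the block `L₀` containing `0` is unrestricted). -/
def IsEvenNCP (ℓ : ℕ) (x r : ℕ → ℕ) (P : Finset (Finset ℕ)) : Prop :=
  IsNCP (Blam ℓ x) P ∧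
    ∀ L ∈ P, 0 ∉ L →
      Even (∑ j ∈ (Finset.Icc 1 ℓ).filter (fun j => 2 * x j ∈ L), r j)

/-- The partition of `B_λ` into the fibers of the cluster map `b_T` (equivalently, over
the open clusters of `T`, which are exactly the clusters in the image of `b_T`). -/
def fibersOf (ℓ : ℕ) (x : ℕ → ℕ) (T : List Domino) : Finset (Finset ℕ) :=
  (Blam ℓ x).image
    (fun v => (Blam ℓ x).filter (fun w => (clusterData T).2 w = (clusterData T).2 v))

/-!
A partition of type C is emptied by removing one domino at a time, keeping the noncrossing partition
of its even parts even; read backwards, the removals build the tableau. If `2i+1` is a part, it has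
even multiplicity and a vertical domino is removed from column `2i+1`. If all parts are even, and
`2i+2` is a part that shares its block with `2i` or for which `2i` is neither a part nor `0`, a
horizontal domino is removed from columns `2i+1`, `2i+2`. Otherwise the even parts are consecutive
and no two neighbours share a block; a noncrossing partition with this property has a singleton
block `{2i}` with `i > 0`. The multiplicity of `2i` is then even, and a vertical domino is removed
from column `2i`.

The blocks are given by a colouring of all natural numbers, which may be changed freely at indices
that are not parts: if `2i` is not a part, it takes the colour of `2i+2` before the horizontal
domino is removed.
-/

/-! ### Noncrossing colourings -/

section Noncrossing

variable {ι ι' α : Type*} [Preorder ι] [Preorder ι']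

/-- A colouring of an ordered set whose colour classes form a noncrossing partition. Weak
inequalities suffice: if two neighbouring arguments coincide, the condition is automatic. -/
def IsNoncrossingColoring (κ : ι → α) : Prop :=
  ∀ ⦃a b c d⦄, a ≤ b → b ≤ c → c ≤ d → κ a = κ c → κ b = κ d → κ a = κ b

lemma IsNoncrossingColoring.comp_monotone {κ : ι → α} (hκ : IsNoncrossingColoring κ) {g : ι' → ι}
    (hg : Monotone g) : IsNoncrossingColoring (κ ∘ g) :=
  fun _ _ _ _ hab hbc hcd => hκ (hg hab) (hg hbc) (hg hcd)

lemma IsNoncrossingColoring.exists_singleton_class_of_eq {κ : ℕ → α} {S : Set ℕ}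
    (hκ : IsNoncrossingColoring κ) (hS : IsLowerSet S) (hadj : ∀ i, i + 1 ∈ S → κ i ≠ κ (i + 1))
    {a b : ℕ} (hab : a < b) (hb : b ∈ S) (heq : κ a = κ b) :
    ∃ i, 0 < i ∧ i ∈ S ∧ ∀ s ∈ S, κ s = κ i → s = i := by
  induction b using Nat.strong_induction_on generalizing a with
  | _ b ih =>
    have ha : a + 1 ∈ S := hS hab hb
    by_cases hsingle : ∀ s ∈ S, κ s = κ (a + 1) → s = a + 1
    · exact ⟨a + 1, a.succ_pos, ha, hsingle⟩
    push Not at hsingle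
    obtain ⟨s, hs, hsa, hne⟩ := hsingle
    have has : a < s := by
      by_contra! hle
      exact hadj a ha ((hκ hle a.le_succ hab hsa heq).symm.trans hsa)
    have hsb : s < b := by
      by_contra! hle
      exact hadj a ha (hκ a.le_succ hab hle heq hsa.symm)
    exact ih s hsb (show a + 1 < s by omega) hs hsa.symm

lemma IsNoncrossingColoring.exists_singleton_class {κ : ℕ → α} {S : Set ℕ}
    (hκ : IsNoncrossingColoring κ) (hS : IsLowerSet S) (hadj : ∀ i, i + 1 ∈ S → κ i ≠ κ (i + 1))
    {b : ℕ} (hb0 : 0 < b) (hb : b ∈ S) :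
    ∃ i, 0 < i ∧ i ∈ S ∧ ∀ s ∈ S, κ s = κ i → s = i := by
  by_cases hsingle : ∀ s ∈ S, κ s = κ b → s = b
  · exact ⟨b, hb0, hb, hsingle⟩
  push Not at hsingle
  obtain ⟨s, hs, heq, hne⟩ := hsingle
  rcases lt_or_gt_of_ne hne with hlt | hgt
  · exact hκ.exists_singleton_class_of_eq hS hadj hlt hb heq
  · exact hκ.exists_singleton_class_of_eq hS hadj hgt hs heq.symm

end Noncrossing

/-! ### Tableaux as stacks of columns -/

section Columns

variable {T : List Domino} {N : ℕ → ℕ}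

lemma boxesOf_cons (d : Domino) (T : List Domino) :
    boxesOf (d :: T) = d.boxes ∪ boxesOf T := rfl

lemma boxes_subset_boxesOf {d : Domino} (hd : d ∈ T) : d.boxes ⊆ boxesOf T := by
  induction T with
  | nil => simp at hd
  | cons e T ih =>
    rw [boxesOf_cons]
    rcases List.mem_cons.1 hd with rfl | hd
    · exact Finset.subset_union_left
    · exact (ih hd).trans Finset.subset_union_right

lemma labelOf_le_length (T : List Domino) (p : ℕ × ℕ) : labelOf T p ≤ T.length := by
  induction T with
  | nil => simp [labelOf]
  | cons e T ih => grind [labelOf]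

lemma labelOf_cons_le_labelOf_cons {d : Domino} {p q : ℕ × ℕ}
    (hd : Disjoint d.boxes (boxesOf T)) (hq : q ∈ boxesOf (d :: T))
    (hpq : q ∈ boxesOf T → p ∈ boxesOf T ∧ labelOf T p ≤ labelOf T q) :
    labelOf (d :: T) p ≤ labelOf (d :: T) q := by
  by_cases hqd : q ∈ d.boxes
  · simpa [labelOf, hqd] using labelOf_le_length (d :: T) p
  · obtain ⟨hp, hle⟩ := hpq ((Finset.mem_union.1 hq).resolve_left hqd)
    simpa [labelOf, hqd, Finset.disjoint_right.1 hd hp] using hle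

lemma IsStandardDT.cons {d : Domino} (hT : IsStandardDT T) (hvalid : d.valid)
    (hd : Disjoint d.boxes (boxesOf T)) (hyoung : IsYoungDiagramSet (boxesOf (d :: T))) :
    IsStandardDT (d :: T) := by
  obtain ⟨hTvalid, hTdisj, ⟨_, hleft, hup⟩, hcol, hrow⟩ := hT
  refine ⟨List.forall_mem_cons.2 ⟨hvalid, hTvalid⟩, List.pairwise_cons.2
    ⟨fun e he => Finset.disjoint_of_subset_right (boxes_subset_boxesOf he) hd, hTdisj⟩, hyoung,
    fun i j hp hq => labelOf_cons_le_labelOf_cons hd hq fun hqT => ?_,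
    fun i j hp hq => labelOf_cons_le_labelOf_cons hd hq fun hqT => ?_⟩
  · have hpT := hup i j hqT (hyoung.1 _ hp).1
    exact ⟨hpT, hcol i j hpT hqT⟩
  · have hpT := hleft i j hqT (hyoung.1 _ hp).2
    exact ⟨hpT, hrow i j hpT hqT⟩

/-- The boxes of `T` form the diagram whose column `j ≥ 1` has height `N j`. The value `N 0` is
free. -/
def Fills (T : List Domino) (N : ℕ → ℕ) : Prop :=
  ∀ i j, (i, j) ∈ boxesOf T ↔ 1 ≤ i ∧ 1 ≤ j ∧ i ≤ N j

lemma Fills.isYoungDiagramSet (h : Fills T N) (hN : Antitone N) :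
    IsYoungDiagramSet (boxesOf T) := by
  refine ⟨fun p hp => ?_, fun i j hij hj => ?_, fun i j hij hi => ?_⟩
  · exact ⟨((h _ _).1 hp).1, ((h _ _).1 hp).2.1⟩
  · rw [h] at hij ⊢
    exact ⟨hij.1, hj, hij.2.2.trans (hN j.le_succ)⟩
  · rw [h] at hij ⊢
    exact ⟨hi, hij.2.1, i.le_succ.trans hij.2.2⟩

lemma Fills.image_fst (h : Fills T N) (hN : Antitone N) :
    (boxesOf T).image Prod.fst = Finset.Icc 1 (N 1) := by
  ext i
  simp only [Finset.mem_image, Prod.exists, exists_and_right, exists_eq_right, Finset.mem_Icc]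
  constructor
  · rintro ⟨j, hj⟩
    obtain ⟨hi, hj, hij⟩ := (h i j).1 hj
    exact ⟨hi, hij.trans (hN hj)⟩
  · rintro ⟨hi, hij⟩
    exact ⟨1, (h i 1).2 ⟨hi, le_rfl, hij⟩⟩

lemma le_card_iff_mem {s : Finset ℕ} (hpos : ∀ j ∈ s, 1 ≤ j)
    (hlower : ∀ ⦃a b⦄, 1 ≤ a → a ≤ b → b ∈ s → a ∈ s) {m : ℕ} (hm : 1 ≤ m) :
    m ≤ s.card ↔ m ∈ s := by
  constructor
  · contrapose!
    intro hms
    have hsub : s ⊆ Finset.Ico 1 m := fun j hj =>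
      Finset.mem_Ico.2 ⟨hpos j hj, lt_of_not_ge fun hmj => hms (hlower hm hmj hj)⟩
    have hcard := Finset.card_le_card hsub
    rw [Nat.card_Ico] at hcard
    omega
  · intro hms
    have hsub : Finset.Icc 1 m ⊆ s := fun j hj =>
      hlower (Finset.mem_Icc.1 hj).1 (Finset.mem_Icc.1 hj).2 hms
    simpa using Finset.card_le_card hsub

lemma Fills.le_rowLen_iff (h : Fills T N) (hN : Antitone N) {i m : ℕ} (hi : 1 ≤ i) (hm : 1 ≤ m) :
    m ≤ rowLen T i ↔ i ≤ N m := by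
  set row := ((boxesOf T).filter (fun p => p.1 = i)).image Prod.snd with hrow
  have hmem : ∀ j, j ∈ row ↔ 1 ≤ j ∧ i ≤ N j := fun j => by
    simp [hrow, h i j, hi]
  have hcard : rowLen T i = row.card :=
    (Finset.card_image_of_injOn fun p hp q hq hpq => Prod.ext
      ((Finset.mem_filter.1 hp).2.trans (Finset.mem_filter.1 hq).2.symm) hpq).symm
  rw [hcard, le_card_iff_mem (fun j hj => ((hmem j).1 hj).1)
    (fun a b ha hab hb => (hmem a).2 ⟨ha, ((hmem b).1 hb).2.trans (hN hab)⟩) hm, hmem]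
  simp [hm]

lemma Fills.count_shapeOf (h : Fills T N) (hN : Antitone N) {m : ℕ} (hm : 1 ≤ m) :
    (shapeOf T).count m = N m - N (m + 1) := by
  have hrows : (Finset.Icc 1 (N 1)).filter (fun i => m = rowLen T i) =
      Finset.Ioc (N (m + 1)) (N m) := by
    ext i
    have hle : N m ≤ N 1 := hN hm
    rw [Finset.mem_filter, Finset.mem_Icc, Finset.mem_Ioc]
    by_cases hi : 1 ≤ i
    · have h₁ := h.le_rowLen_iff hN hi hm
      have h₂ := h.le_rowLen_iff hN hi (show 1 ≤ m + 1 by omega)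
      omega
    · omega
  rw [shapeOf, h.image_fst hN, Multiset.count_map, ← Finset.filter_val, hrows, Finset.card_val,
    Nat.card_Ioc]

lemma Fills.zero_notMem_shapeOf (h : Fills T N) (hN : Antitone N) : 0 ∉ shapeOf T := by
  rw [shapeOf, h.image_fst hN, Multiset.mem_map]
  rintro ⟨i, hi, hzero⟩
  obtain ⟨hi, hiN⟩ := Finset.mem_Icc.1 (Finset.mem_def.2 hi)
  have := (h.le_rowLen_iff hN hi le_rfl).2 hiN
  omega

lemma Fills.mem_partsFinset_iff (h : Fills T N) (hN : Antitone N) {m : ℕ} (hm : 1 ≤ m) :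
    m ∈ partsFinset T ↔ N (m + 1) < N m := by
  have hparts : m ∈ partsFinset T ↔ m ∈ shapeOf T := by simp [partsFinset, shapeOf]
  rw [hparts, ← Multiset.count_pos, h.count_shapeOf hN hm, Nat.sub_pos_iff_lt]

lemma Fills.cons_vertical {c : ℕ} (h : Fills T N) (hc : 1 ≤ c) :
    Fills (.V (N c + 1) c :: T) (N + Pi.single c 2) := by
  intro i j
  rw [boxesOf_cons, Finset.mem_union, h]
  grind [Domino.boxes, Pi.add_apply]

lemma Fills.disjoint_vertical {c : ℕ} (h : Fills T N) :
    Disjoint (Domino.V (N c + 1) c).boxes (boxesOf T) := by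
  rw [Finset.disjoint_left]
  rintro ⟨i, j⟩ hij
  rw [h]
  grind [Domino.boxes]

lemma Fills.cons_horizontal {c : ℕ} (h : Fills T N) (hc : 1 ≤ c) (heq : N c = N (c + 1)) :
    Fills (.H (N c + 1) c :: T) (N + (Pi.single c 1 + Pi.single (c + 1) 1)) := by
  intro i j
  rw [boxesOf_cons, Finset.mem_union, h]
  grind [Domino.boxes, Pi.add_apply]

lemma Fills.disjoint_horizontal {c : ℕ} (h : Fills T N) (heq : N c = N (c + 1)) :
    Disjoint (Domino.H (N c + 1) c).boxes (boxesOf T) := by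
  rw [Finset.disjoint_left]
  rintro ⟨i, j⟩ hij
  rw [h]
  grind [Domino.boxes]

end Columns

/-! ### Shapes of type C -/

section TypeC

lemma even_multiset_sum_of_even_count {s : Multiset ℕ} (h : ∀ m, Odd m → Even (s.count m)) :
    Even s.sum := by
  rw [Finset.sum_multiset_count]
  refine Finset.even_sum _ fun m _ => ?_
  rcases Nat.even_or_odd m with hm | hm
  · exact hm.mul_left _
  · exact (h m hm).mul_right _

lemma isAdmissibleC_nil : IsAdmissibleC [] := by
  refine ⟨by simp [IsStandardDT, IsYoungDiagramSet, boxesOf], fun k => ?_⟩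
  simp [IsTypeCShape, shapeOf, boxesOf]

/-- `N` lists the column heights of a partition of type C whose columns `j ≥ M` are empty. Column
`0` is taller than all others, so that `0` counts as an even part, as it does in `B_λ`. -/
structure IsTypeCHeights (M : ℕ) (N : ℕ → ℕ) : Prop where
  antitone : Antitone N
  one_lt_zero : N 1 < N 0
  eq_zero : N M = 0
  odd_mod_two : ∀ t, N (2 * t + 1) % 2 = N (2 * t + 2) % 2

/-- `2 * t` is a part of the partition with column heights `N`. -/
def EvenPart (N : ℕ → ℕ) (t : ℕ) : Prop := N (2 * t + 1) < N (2 * t)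

/-- The parity of the multiplicity of the part `2 * t` in the partition with column heights `N`. -/
def evenMult (N : ℕ → ℕ) (t : ℕ) : ZMod 2 := N (2 * t) - N (2 * t + 1)

variable {M : ℕ} {N : ℕ → ℕ} {T : List Domino}

lemma Fills.isTypeCShape (h : Fills T N) (hN : IsTypeCHeights M N) :
    IsTypeCShape (shapeOf T) := by
  have hcount : ∀ m, Odd m → Even ((shapeOf T).count m) := by
    rintro m ⟨t, rfl⟩
    rw [h.count_shapeOf hN.antitone (by omega), Nat.even_iff]
    change (N (2 * t + 1) - N (2 * t + 2)) % 2 = 0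
    have := hN.odd_mod_two t
    have hle : N (2 * t + 2) ≤ N (2 * t + 1) := hN.antitone (by omega)
    omega
  exact ⟨even_multiset_sum_of_even_count hcount, hcount⟩

lemma IsAdmissibleC.cons {d : Domino} (hT : IsAdmissibleC T) (hvalid : d.valid)
    (hd : Disjoint d.boxes (boxesOf T)) (hfill : Fills (d :: T) N) (hN : IsTypeCHeights M N) :
    IsAdmissibleC (d :: T) := by
  refine ⟨hT.1.cons hvalid hd (hfill.isYoungDiagramSet hN.antitone), fun k => ?_⟩
  cases k with
  | zero => exact hfill.isTypeCShape hN
  | succ k => exact hT.2 k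

lemma evenMult_eq_zero (hN : Antitone N) {t : ℕ} (ht : ¬EvenPart N t) : evenMult N t = 0 := by
  have heq : N (2 * t) = N (2 * t + 1) := le_antisymm (not_lt.1 ht) (hN (2 * t).le_succ)
  simp [evenMult, heq]

lemma sum_evenMult_congr {α : Type*} [DecidableEq α] (hN : Antitone N) {κ κ' : ℕ → α}
    (hκ : ∀ t, EvenPart N t → κ t = κ' t) (s : Finset ℕ) (c : α) :
    ∑ t ∈ s with κ t = c, evenMult N t = ∑ t ∈ s with κ' t = c, evenMult N t := by
  rw [Finset.sum_filter, Finset.sum_filter]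
  refine Finset.sum_congr rfl fun t _ => ?_
  by_cases ht : EvenPart N t
  · rw [hκ t ht]
  · simp [evenMult_eq_zero hN ht]

lemma evenMult_add_single_two (N : ℕ → ℕ) (c : ℕ) :
    evenMult (N + Pi.single c 2) = evenMult N := by
  have htwo : (2 : ZMod 2) = 0 := rfl
  have hcast : ∀ j, ((Pi.single c 2 : ℕ → ℕ) j : ZMod 2) = 0 := fun j => by
    rcases eq_or_ne j c with rfl | hj
    · simpa using htwo
    · simp [hj]
  ext t
  simp [evenMult, hcast]

lemma evenMult_add_horizontal (N : ℕ → ℕ) (i : ℕ) :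
    evenMult (N + (Pi.single (2 * i + 1) 1 + Pi.single (2 * i + 2) 1)) =
      evenMult N + (Pi.single i 1 + Pi.single (i + 1) 1) := by
  ext t
  have h₁ : 2 * t ≠ 2 * i + 1 := by omega
  have h₂ : 2 * t + 1 ≠ 2 * i + 2 := by omega
  have h₃ : 2 * t = 2 * i + 2 ↔ t = i + 1 := by omega
  have h₄ : 2 * t + 1 = 2 * i + 1 ↔ t = i := by omega
  simp only [evenMult, Pi.add_apply, Nat.cast_add, Nat.cast_ite, Nat.cast_one, Nat.cast_zero,
    CharTwo.sub_eq_add, Pi.single_apply, h₁, h₂, h₃, h₄, if_false]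
  ring

lemma IsTypeCHeights.of_add_single {c : ℕ} (h : IsTypeCHeights M (N + Pi.single c 2))
    (hc : 0 < c) (hle : N (c + 1) ≤ N c) : IsTypeCHeights M N where
  antitone := antitone_nat_of_succ_le fun j => by
    have := h.antitone j.le_succ
    grind [Pi.add_apply]
  one_lt_zero := by
    have := h.one_lt_zero
    grind [Pi.add_apply]
  eq_zero := by
    have := h.eq_zero
    grind [Pi.add_apply]
  odd_mod_two t := by
    have := h.odd_mod_two t
    grind [Pi.add_apply]

lemma IsTypeCHeights.of_add_horizontal {i : ℕ}
    (h : IsTypeCHeights M (N + (Pi.single (2 * i + 1) 1 + Pi.single (2 * i + 2) 1)))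
    (hle : N (2 * i + 3) ≤ N (2 * i + 2)) : IsTypeCHeights M N where
  antitone := antitone_nat_of_succ_le fun j => by
    have := h.antitone j.le_succ
    grind [Pi.add_apply]
  one_lt_zero := by
    have := h.one_lt_zero
    grind [Pi.add_apply]
  eq_zero := by
    have := h.eq_zero
    grind [Pi.add_apply]
  odd_mod_two t := by
    have := h.odd_mod_two t
    grind [Pi.add_apply]

end TypeC

/-! ### The cluster map -/

section Clusters

variable {d : Domino} {T : List Domino}

/-- The map `b_T` from even numbers to clusters. -/
def clusterMap (T : List Domino) : ℕ → Finset ℕ := (clusterData T).2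

/-- When the domino `d` is added to `T`, its new cluster becomes the value of the cluster map
at `m`. -/
def Absorbed : Domino → List Domino → ℕ → Prop
  | .H _ j, T, m => j % 2 = 1 ∧ (m = j + 1 ∨ clusterMap T m = clusterMap T (j - 1) ∨
      j + 1 ∈ partsFinset T ∧ clusterMap T m = clusterMap T (j + 1))
  | .V _ j, T, m => if j % 2 = 0 then m = j ∨ j ∈ partsFinset T ∧ clusterMap T m = clusterMap T j
      else clusterMap T m = clusterMap T (j - 1)

lemma exists_clusterMap_cons (hd : T = [] → ∀ m, Absorbed d T m) :
    ∃ C : Finset ℕ, (∀ y ∈ C, ∃ m, y ∈ clusterMap T m) ∧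
      (∀ m, Absorbed d T m → clusterMap (d :: T) m = insert (T.length + 1) C) ∧
      ∀ m, ¬Absorbed d T m → clusterMap (d :: T) m = clusterMap T m := by
  cases T with
  | nil => exact ⟨∅, by simp, fun _ _ => rfl, fun m hm => absurd (hd rfl m) hm⟩
  | cons e T =>
    cases d with
    | H i j =>
      by_cases hj : j % 2 = 1
      · refine ⟨clusterMap (e :: T) (j - 1) ∪
          if j + 1 ∈ partsFinset (e :: T) then clusterMap (e :: T) (j + 1) else ∅, ?_, ?_, ?_⟩ <;>
          by_cases hp : j + 1 ∈ partsFinset (e :: T) <;>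
          simp only [clusterMap, clusterData, Absorbed, hj, hp, if_true, if_false] <;> grind
      · exact ⟨∅, by simp, fun m hm => absurd hm.1 hj,
          fun m _ => by simp only [clusterMap, clusterData, hj, if_false]⟩
    | V i j =>
      by_cases hj : j % 2 = 0
      · refine ⟨if j ∈ partsFinset (e :: T) then clusterMap (e :: T) j else ∅, ?_, ?_, ?_⟩ <;>
          by_cases hp : j ∈ partsFinset (e :: T) <;>
          simp only [clusterMap, clusterData, Absorbed, hj, hp, if_true, if_false] <;> grind
      · refine ⟨clusterMap (e :: T) (j - 1), ?_, ?_, ?_⟩ <;>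
          simp only [clusterMap, clusterData, Absorbed, hj, if_false] <;> grind

lemma le_length_of_mem_clusterMap (T : List Domino) {m y : ℕ} (hy : y ∈ clusterMap T m) :
    y ≤ T.length := by
  induction T generalizing m with
  | nil => simp [clusterMap, clusterData] at hy
  | cons d T ih =>
    rcases eq_or_ne T [] with rfl | hT
    · simp_all [clusterMap, clusterData]
    obtain ⟨C, hC, habs, hnot⟩ := exists_clusterMap_cons (d := d) fun h => absurd h hT
    rw [List.length_cons]
    by_cases hm : Absorbed d T m
    · rw [habs m hm, Finset.mem_insert] at hy
      rcases hy with rfl | hy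
      · rfl
      · obtain ⟨m', hm'⟩ := hC y hy
        exact (ih hm').trans (Nat.le_succ _)
    · exact (ih (hnot m hm ▸ hy)).trans (Nat.le_succ _)

lemma clusterMap_cons_eq_iff (hd : T = [] → ∀ m, Absorbed d T m) {u v : ℕ} :
    clusterMap (d :: T) u = clusterMap (d :: T) v ↔ (Absorbed d T u ↔ Absorbed d T v) ∧
      (Absorbed d T u ∨ clusterMap T u = clusterMap T v) := by
  obtain ⟨C, -, habs, hnot⟩ := exists_clusterMap_cons hd
  have hfresh : ∀ m, T.length + 1 ∉ clusterMap T m := fun m hm => by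
    have := le_length_of_mem_clusterMap T hm
    omega
  by_cases hu : Absorbed d T u <;> by_cases hv : Absorbed d T v
  · simp [habs, hu, hv]
  · have hne : clusterMap T v ≠ insert (T.length + 1) C := fun h => hfresh v (by simp [h])
    simp [habs, hnot, hu, hv, hne.symm]
  · have hne : clusterMap T u ≠ insert (T.length + 1) C := fun h => hfresh u (by simp [h])
    simp [habs, hnot, hu, hv, hne]
  · simp [hnot, hu, hv]

end Clusters

/-! ### Building tableaux domino by domino -/

section Realization

variable {α : Type*} {M i : ℕ} {N N' : ℕ → ℕ} {κ κ' : ℕ → α} {d : Domino} {T : List Domino}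

/-- `T` is an admissible tableau with column heights `N`, and its cluster map separates the even
parts `2 * t` exactly as the colouring `κ` separates the indices `t`. -/
structure Realizes (T : List Domino) (N : ℕ → ℕ) (κ : ℕ → α) : Prop where
  admissible : IsAdmissibleC T
  fills : Fills T N
  clusterMap_eq_iff : ∀ s t, EvenPart N s → EvenPart N t →
    (clusterMap T (2 * s) = clusterMap T (2 * t) ↔ κ s = κ t)

lemma Realizes.congr (h : Realizes T N κ) (hκ : ∀ t, EvenPart N t → κ t = κ' t) :
    Realizes T N κ' :=
  ⟨h.admissible, h.fills, fun s t hs ht => by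
    rw [h.clusterMap_eq_iff s t hs ht, hκ s hs, hκ t ht]⟩

lemma Realizes.nil (hN : Antitone N) (hN1 : N 1 = 0) : Realizes [] N κ := by
  have hzero : ∀ j, 1 ≤ j → N j = 0 := fun j hj => Nat.le_zero.1 (hN1 ▸ hN hj)
  refine ⟨isAdmissibleC_nil, fun i j => ?_, fun s t hs ht => ?_⟩
  · simp only [boxesOf, List.foldr_nil, Finset.notMem_empty, false_iff]
    rintro ⟨hi, hj, hij⟩
    have := hzero j hj
    omega
  · have hpart : ∀ s, EvenPart N s → s = 0 := fun s hs => by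
      by_contra hs0
      have := hzero (2 * s) (by omega)
      exact absurd hs (by simp [EvenPart, this])
    simp [hpart s hs, hpart t ht]

lemma Realizes.cons (h : Realizes T N κ) (hvalid : d.valid) (hdisj : Disjoint d.boxes (boxesOf T))
    (hfill : Fills (d :: T) N') (hN' : IsTypeCHeights M N')
    (hempty : T = [] → ∀ m, Absorbed d T m) {c : α}
    (habs : ∀ s, EvenPart N' s → (Absorbed d T (2 * s) ↔ κ s = c))
    (hold : ∀ s, EvenPart N' s → κ s ≠ c → EvenPart N s) :
    Realizes (d :: T) N' κ := by
  refine ⟨h.admissible.cons hvalid hdisj hfill hN', hfill, fun s t hs ht => ?_⟩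
  rw [clusterMap_cons_eq_iff hempty, habs s hs, habs t ht]
  by_cases hsc : κ s = c <;> by_cases htc : κ t = c
  · simp [hsc, htc]
  · simp [hsc, htc, Ne.symm htc]
  · simp [hsc, htc]
  · simp [hsc, htc, h.clusterMap_eq_iff s t (hold s hs hsc) (hold t ht htc)]

lemma Realizes.cons_vertical_odd (h : Realizes T N κ)
    (hN' : IsTypeCHeights M (N + Pi.single (2 * i + 1) 2)) :
    Realizes (.V (N (2 * i + 1) + 1) (2 * i + 1) :: T) (N + Pi.single (2 * i + 1) 2) κ := by
  have hi : EvenPart N i := by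
    have := hN'.antitone (2 * i).le_succ
    grind [EvenPart, Pi.add_apply]
  have hold : ∀ s, EvenPart (N + Pi.single (2 * i + 1) 2) s → EvenPart N s := by
    grind [EvenPart, Pi.add_apply]
  refine h.cons (c := κ i) ⟨by omega, by omega⟩ h.fills.disjoint_vertical
    (h.fills.cons_vertical (by omega)) hN' ?_ (fun s hs => ?_) (fun s hs _ => hold s hs)
  · rintro rfl m
    simp [Absorbed, clusterMap, clusterData]
  · simp [Absorbed, h.clusterMap_eq_iff s i (hold s hs) hi]

lemma Realizes.cons_vertical_even (h : Realizes T N κ) (hN : IsTypeCHeights M N)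
    (hN' : IsTypeCHeights M (N + Pi.single (2 * i) 2)) (hi : 0 < i)
    (hsingle : ∀ s, EvenPart (N + Pi.single (2 * i) 2) s → κ s = κ i → s = i) :
    Realizes (.V (N (2 * i) + 1) (2 * i) :: T) (N + Pi.single (2 * i) 2) κ := by
  have hold : ∀ s, EvenPart (N + Pi.single (2 * i) 2) s → s ≠ i → EvenPart N s := by
    grind [EvenPart, Pi.add_apply]
  refine h.cons (c := κ i) ⟨by omega, by omega⟩ h.fills.disjoint_vertical
    (h.fills.cons_vertical (by omega)) hN' ?_ (fun s hs => ?_) (fun s hs hne => hold s hs ?_)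
  · rintro rfl
    have hle := hN'.antitone (show 2 * i - 1 ≤ 2 * i by omega)
    have hbox := (h.fills 1 (2 * i - 1)).2 ⟨le_rfl, by omega, by grind [Pi.add_apply]⟩
    simp [boxesOf] at hbox
  · have hparts : 2 * i ∈ partsFinset T ↔ EvenPart N i :=
      h.fills.mem_partsFinset_iff hN.antitone (by omega)
    rcases eq_or_ne s i with rfl | hsi
    · simp [Absorbed]
    · have hκ : κ s ≠ κ i := fun hκ => hsi (hsingle s hs hκ)
      have hclus : EvenPart N i → clusterMap T (2 * s) ≠ clusterMap T (2 * i) := fun hi' hc =>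
        hκ ((h.clusterMap_eq_iff s i (hold s hs hsi) hi').1 hc)
      simpa [Absorbed, hsi, hparts, hκ] using hclus
  · rintro rfl
    exact hne rfl

lemma Realizes.cons_horizontal (h : Realizes T N κ) (hN : IsTypeCHeights M N)
    (hN' : IsTypeCHeights M (N + (Pi.single (2 * i + 1) 1 + Pi.single (2 * i + 2) 1)))
    (heq : N (2 * i + 1) = N (2 * i + 2)) (hκ : κ i = κ (i + 1)) :
    Realizes (.H (N (2 * i + 1) + 1) (2 * i + 1) :: T)
      (N + (Pi.single (2 * i + 1) 1 + Pi.single (2 * i + 2) 1)) κ := by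
  have hi : EvenPart N i := by
    have := hN'.antitone (2 * i).le_succ
    grind [EvenPart, Pi.add_apply]
  have hold : ∀ s, EvenPart (N + (Pi.single (2 * i + 1) 1 + Pi.single (2 * i + 2) 1)) s →
      s ≠ i + 1 → EvenPart N s := by
    grind [EvenPart, Pi.add_apply]
  refine h.cons (c := κ i) ⟨by omega, by omega⟩ (h.fills.disjoint_horizontal heq)
    (h.fills.cons_horizontal (by omega) heq) hN' ?_ (fun s hs => ?_) (fun s hs hne => hold s hs ?_)
  · rintro rfl m
    simp [Absorbed, clusterMap, clusterData, Nat.add_mod]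
  · have hparts : 2 * i + 2 ∈ partsFinset T ↔ EvenPart N (i + 1) :=
      h.fills.mem_partsFinset_iff hN.antitone (by omega)
    rcases eq_or_ne s (i + 1) with rfl | hsi
    · simp [Absorbed, hκ, mul_add, Nat.add_mod]
    · have hclus := h.clusterMap_eq_iff s i (hold s hs hsi) hi
      have hclus' := h.clusterMap_eq_iff s (i + 1) (hold s hs hsi)
      grind [Absorbed]
  · rintro rfl
    exact hne hκ.symm

end Realization

/-! ### Peeling off dominoes -/

section Peeling

variable {α : Type*} {M i c : ℕ} {N g : ℕ → ℕ} {κ κ' : ℕ → α}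

lemma exists_eq_add_of_fun_le (h : g ≤ N) : ∃ N', N = N' + g :=
  ⟨N - g, (tsub_add_cancel_of_le h).symm⟩

lemma IsTypeCHeights.evenPart_zero (h : IsTypeCHeights M N) : EvenPart N 0 := h.one_lt_zero

lemma IsTypeCHeights.lt_of_pos (h : IsTypeCHeights M N) (hc : 0 < N c) : c < M := by
  by_contra! hle
  have := h.antitone hle
  have := h.eq_zero
  omega

lemma IsTypeCHeights.sum_lt_sum_add (h : IsTypeCHeights M (N + g)) (hc : 0 < g c) :
    ∑ t ∈ Finset.range M, N t < ∑ t ∈ Finset.range M, (N + g) t := by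
  have hcM : c < M := h.lt_of_pos (Nat.add_pos_right _ hc)
  exact Finset.sum_lt_sum (fun t _ => Nat.le_add_right _ _)
    ⟨c, Finset.mem_range.2 hcM, Nat.lt_add_of_pos_right hc⟩

lemma monotone_update_id_succ (i : ℕ) : Monotone (Function.update id i (i + 1)) := by
  intro a b hab
  grind [Function.update_apply]

lemma comp_update_succ_eq (hκ : EvenPart N i → κ i = κ (i + 1)) {t : ℕ} (ht : EvenPart N t) :
    (κ ∘ Function.update id i (i + 1)) t = κ t := by
  rcases eq_or_ne t i with rfl | hti
  · simp [hκ ht]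
  · simp [hti]

variable [DecidableEq α]

/-- `N` lists the column heights of a partition of type C and `κ` colours the indices `t` of its
even parts `2 * t` so that the colour classes form an even noncrossing partition. Indices of even
numbers that are not parts are coloured as well, but do not contribute to the sums. -/
structure IsEvenColoring (M : ℕ) (N : ℕ → ℕ) (κ : ℕ → α) : Prop
    extends IsTypeCHeights M N where
  noncrossing : IsNoncrossingColoring κ
  sum_eq_zero : ∀ a, a ≠ κ 0 → ∑ t ∈ Finset.range M with κ t = a, evenMult N t = 0

lemma IsEvenColoring.of_add_single (h : IsEvenColoring M (N + Pi.single c 2) κ) (hc : 0 < c)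
    (hle : N (c + 1) ≤ N c) : IsEvenColoring M N κ where
  toIsTypeCHeights := h.toIsTypeCHeights.of_add_single hc hle
  noncrossing := h.noncrossing
  sum_eq_zero a ha := evenMult_add_single_two N c ▸ h.sum_eq_zero a ha

lemma IsEvenColoring.comp_update_succ (h : IsEvenColoring M N κ)
    (hκ : EvenPart N i → κ i = κ (i + 1)) :
    IsEvenColoring M N (κ ∘ Function.update id i (i + 1)) where
  toIsTypeCHeights := h.toIsTypeCHeights
  noncrossing := h.noncrossing.comp_monotone (monotone_update_id_succ i)
  sum_eq_zero a ha := by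
    rw [sum_evenMult_congr h.antitone fun t ht => comp_update_succ_eq hκ ht]
    exact h.sum_eq_zero a (by rwa [comp_update_succ_eq hκ h.evenPart_zero] at ha)

lemma IsEvenColoring.of_add_horizontal
    (h : IsEvenColoring M (N + (Pi.single (2 * i + 1) 1 + Pi.single (2 * i + 2) 1)) κ)
    (hle : N (2 * i + 3) ≤ N (2 * i + 2)) (hκ : κ i = κ (i + 1)) : IsEvenColoring M N κ where
  toIsTypeCHeights := h.toIsTypeCHeights.of_add_horizontal hle
  noncrossing := h.noncrossing
  sum_eq_zero a ha := by
    have hiM : 2 * i + 2 < M := h.lt_of_pos (by simp)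
    have hsingle : ∀ j < M, ∑ t ∈ Finset.range M with κ t = a, (Pi.single j 1 : ℕ → ZMod 2) t =
        if κ j = a then 1 else 0 := fun j hj => by
      simp [hj]
    have hsum := h.sum_eq_zero a ha
    simp only [evenMult_add_horizontal, Pi.add_apply, Finset.sum_add_distrib] at hsum
    rwa [hsingle i (by omega), hsingle (i + 1) (by omega), hκ, CharTwo.add_self_eq_zero,
      add_zero] at hsum

lemma IsEvenColoring.add_two_le_of_singleton (h : IsEvenColoring M N κ) (hi0 : i ≠ 0)
    (hi : EvenPart N i) (hsingle : ∀ s, EvenPart N s → κ s = κ i → s = i) :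
    N (2 * i + 1) + 2 ≤ N (2 * i) := by
  have hiM : 2 * i < M := h.lt_of_pos (Nat.zero_lt_of_lt hi)
  have hcolor : κ i ≠ κ 0 := fun heq => hi0 (hsingle 0 h.evenPart_zero heq.symm).symm
  have hclass : ∑ t ∈ Finset.range M with κ t = κ i, evenMult N t = evenMult N i :=
    Finset.sum_eq_single_of_mem i (by simp; omega) fun t ht hti =>
      evenMult_eq_zero h.antitone fun hpart => hti (hsingle t hpart (Finset.mem_filter.1 ht).2)
  have hmult : (N (2 * i) : ZMod 2) = N (2 * i + 1) :=
    sub_eq_zero.1 (hclass.symm.trans (h.sum_eq_zero _ hcolor))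
  rw [ZMod.natCast_eq_natCast_iff'] at hmult
  have hlt : N (2 * i + 1) < N (2 * i) := hi
  omega

/-- Tableaux realizing the colouring `κ` arise from tableaux realizing an even colouring of a
smaller partition by adding one domino. -/
def Peelable (M : ℕ) (N : ℕ → ℕ) (κ : ℕ → α) : Prop :=
  ∃ (N' : ℕ → ℕ) (κ' : ℕ → α), IsEvenColoring M N' κ' ∧
    ∑ t ∈ Finset.range M, N' t < ∑ t ∈ Finset.range M, N t ∧
    ∀ T, Realizes T N' κ' → ∃ d, Realizes (d :: T) N κ

lemma Peelable.congr (h : Peelable M N κ) (hκ : ∀ t, EvenPart N t → κ t = κ' t) :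
    Peelable M N κ' := by
  obtain ⟨N', κ'', heven, hlt, hcons⟩ := h
  exact ⟨N', κ'', heven, hlt, fun T hT => (hcons T hT).imp fun _ hd => hd.congr hκ⟩

lemma IsEvenColoring.peelable_of_odd_part (h : IsEvenColoring M N κ)
    (hi : N (2 * i + 2) < N (2 * i + 1)) : Peelable M N κ := by
  have hparity := h.odd_mod_two i
  obtain ⟨N', rfl⟩ : ∃ N' : ℕ → ℕ, N = N' + Pi.single (2 * i + 1) 2 :=
    exists_eq_add_of_fun_le fun j => by grind
  have hle : N' (2 * i + 2) ≤ N' (2 * i + 1) := by grind [Pi.add_apply]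
  exact ⟨N', κ, h.of_add_single (by omega) hle, h.sum_lt_sum_add (c := 2 * i + 1) (by simp),
    fun T hT => ⟨_, hT.cons_vertical_odd h.toIsTypeCHeights⟩⟩

lemma IsEvenColoring.peelable_of_adjacent (h : IsEvenColoring M N κ)
    (heq : N (2 * i + 1) = N (2 * i + 2)) (hi : EvenPart N (i + 1)) (hκ : κ i = κ (i + 1)) :
    Peelable M N κ := by
  have hlt : N (2 * i + 3) < N (2 * i + 2) := hi
  obtain ⟨N', rfl⟩ : ∃ N' : ℕ → ℕ, N = N' + (Pi.single (2 * i + 1) 1 + Pi.single (2 * i + 2) 1) :=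
    exists_eq_add_of_fun_le fun j => by grind [Pi.add_apply]
  have heq' : N' (2 * i + 1) = N' (2 * i + 2) := by grind [Pi.add_apply]
  have h' := h.of_add_horizontal (by grind [Pi.add_apply]) hκ
  exact ⟨N', κ, h', h.sum_lt_sum_add (c := 2 * i + 1) (by simp), fun T hT =>
    ⟨_, hT.cons_horizontal h'.toIsTypeCHeights h.toIsTypeCHeights heq' hκ⟩⟩

lemma IsEvenColoring.peelable_of_singleton (h : IsEvenColoring M N κ) (hi0 : 0 < i)
    (hi : EvenPart N i) (hsingle : ∀ s, EvenPart N s → κ s = κ i → s = i) : Peelable M N κ := by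
  have htwo := h.add_two_le_of_singleton hi0.ne' hi hsingle
  obtain ⟨N', rfl⟩ : ∃ N' : ℕ → ℕ, N = N' + Pi.single (2 * i) 2 :=
    exists_eq_add_of_fun_le fun j => by grind
  have hle : N' (2 * i + 1) ≤ N' (2 * i) := by grind [Pi.add_apply]
  have h' := h.of_add_single (by omega) hle
  exact ⟨N', κ, h', h.sum_lt_sum_add (c := 2 * i) (by simp), fun T hT =>
    ⟨_, hT.cons_vertical_even h'.toIsTypeCHeights h.toIsTypeCHeights hi0 hsingle⟩⟩

lemma IsTypeCHeights.exists_evenPart (h : IsTypeCHeights M N)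
    (hodd : ∀ i, N (2 * i + 1) ≤ N (2 * i + 2)) (hN1 : N 1 ≠ 0) : ∃ i, 0 < i ∧ EvenPart N i := by
  by_contra! hpart
  have hconst : ∀ i, N 1 ≤ N (2 * i + 1) := fun i => by
    induction i with
    | zero => rfl
    | succ i ih => exact (ih.trans (hodd i)).trans (not_lt.1 (hpart (i + 1) i.succ_pos))
  have hM : N (2 * M + 1) ≤ N M := h.antitone (by omega)
  have := hconst M
  have := h.eq_zero
  omega

lemma IsEvenColoring.peelable (h : IsEvenColoring M N κ) (hN1 : N 1 ≠ 0) : Peelable M N κ := by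
  by_cases hodd : ∃ i, N (2 * i + 2) < N (2 * i + 1)
  · exact h.peelable_of_odd_part hodd.choose_spec
  push Not at hodd
  by_cases hadj : ∃ i, EvenPart N (i + 1) ∧ (EvenPart N i → κ i = κ (i + 1))
  · obtain ⟨i, hi, hκ⟩ := hadj
    have heq : N (2 * i + 1) = N (2 * i + 2) := (hodd i).antisymm (h.antitone (Nat.le_succ _))
    exact ((h.comp_update_succ hκ).peelable_of_adjacent heq hi (by simp)).congr
      fun t ht => comp_update_succ_eq hκ ht
  push Not at hadj
  have hlower : IsLowerSet {t | EvenPart N t} := fun b a hab hb =>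
    Nat.decreasingInduction (fun t _ ht => (hadj t ht).1) hb hab
  obtain ⟨b, hb0, hb⟩ := h.exists_evenPart hodd hN1
  obtain ⟨i, hi0, hi, hsingle⟩ :=
    h.noncrossing.exists_singleton_class hlower (fun i hi => (hadj i hi).2) hb0 hb
  exact h.peelable_of_singleton hi0 hi hsingle

theorem IsEvenColoring.exists_realizes (h : IsEvenColoring M N κ) : ∃ T, Realizes T N κ := by
  induction hn : ∑ t ∈ Finset.range M, N t using Nat.strong_induction_on generalizing N κ with
  | _ n ih =>
    by_cases hN1 : N 1 = 0
    · exact ⟨[], .nil h.antitone hN1⟩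
    obtain ⟨N', κ', h', hlt, hcons⟩ := h.peelable hN1
    obtain ⟨T, hT⟩ := ih _ (hn ▸ hlt) h' rfl
    obtain ⟨d, hd⟩ := hcons T hT
    exact ⟨d :: T, hd⟩

end Peeling

/-! ### Column heights of a partition -/

section ColumnHeights

variable {s : Multiset ℕ}

/-- The number of elements of `s` that are at least `j`, i.e. the height of column `j` of the
Young diagram with rows `s`. -/
def columnHeight (s : Multiset ℕ) (j : ℕ) : ℕ := s.countP (j ≤ ·)

lemma columnHeight_eq_add_count (s : Multiset ℕ) (j : ℕ) :
    columnHeight s j = columnHeight s (j + 1) + s.count j := by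
  induction s using Multiset.induction_on with
  | empty => rfl
  | cons a s ih =>
    simp only [columnHeight, Multiset.countP_cons, Multiset.count_cons] at ih ⊢
    grind

lemma isTypeCHeights_columnHeight (h0 : 0 ∈ s) (hodd : ∀ m, Odd m → Even (s.count m)) :
    IsTypeCHeights (s.sum + 1) (columnHeight s) where
  antitone := antitone_nat_of_succ_le fun j => by
    have := columnHeight_eq_add_count s j
    omega
  one_lt_zero := by
    rw [columnHeight_eq_add_count s 0]
    exact Nat.lt_add_of_pos_right (Multiset.count_pos.2 h0)
  eq_zero := Multiset.countP_eq_zero.2 fun m hm =>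
    not_le.2 (Nat.lt_succ_of_le (Multiset.le_sum_of_mem hm))
  odd_mod_two t := by
    have : columnHeight s (2 * t + 1) = columnHeight s (2 * t + 2) + s.count (2 * t + 1) :=
      columnHeight_eq_add_count s (2 * t + 1)
    have := Nat.even_iff.1 (hodd (2 * t + 1) ⟨t, rfl⟩)
    omega

lemma evenPart_columnHeight_iff {t : ℕ} : EvenPart (columnHeight s) t ↔ 2 * t ∈ s := by
  rw [EvenPart, columnHeight_eq_add_count s (2 * t), Nat.lt_add_right_iff_pos, Multiset.count_pos]

lemma evenMult_columnHeight (s : Multiset ℕ) (t : ℕ) :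
    evenMult (columnHeight s) t = s.count (2 * t) := by
  simp [evenMult, columnHeight_eq_add_count s (2 * t)]

lemma Fills.shapeOf_eq {T : List Domino} (h : Fills T (columnHeight (0 ::ₘ s)))
    (hN : Antitone (columnHeight (0 ::ₘ s))) (hs : 0 ∉ s) : shapeOf T = s := by
  ext m
  rcases Nat.eq_zero_or_pos m with rfl | hm
  · rw [Multiset.count_eq_zero_of_notMem (h.zero_notMem_shapeOf hN),
      Multiset.count_eq_zero_of_notMem hs]
  · rw [h.count_shapeOf hN hm, columnHeight_eq_add_count _ m, Nat.add_sub_cancel_left,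
      Multiset.count_cons_of_ne hm.ne']

end ColumnHeights

/-! ### Even noncrossing partitions as colourings -/

section NCP

variable {B : Finset ℕ} {P : Finset (Finset ℕ)} {ℓ : ℕ} {x r : ℕ → ℕ} {lam : Multiset ℕ}
  {β : ℕ → Finset ℕ}

lemma IsPartitionOf.eq_of_mem (h : IsPartitionOf B P) {L L' : Finset ℕ} (hL : L ∈ P)
    (hL' : L' ∈ P) {v : ℕ} (hv : v ∈ L) (hv' : v ∈ L') : L = L' :=
  (h.2.2 v (h.2.1 L hL hv)).unique ⟨hL, hv⟩ ⟨hL', hv'⟩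

lemma IsNCP.exists_coloring (h : IsNCP B P) (h0 : 0 ∈ B) :
    ∃ β : ℕ → Finset ℕ, IsNoncrossingColoring β ∧ (∀ v, β v ∈ P) ∧ ∀ v ∈ B, v ∈ β v := by
  set g : ℕ → ℕ := Nat.findGreatest (· ∈ B)
  have hg : Monotone g := fun _ _ hab => Nat.findGreatest_mono_right _ hab
  have hgB : ∀ v, g v ∈ B := fun v => Nat.findGreatest_spec (P := (· ∈ B)) (Nat.zero_le v) h0
  choose β hβ using fun v => (h.1.2.2 (g v) (hgB v)).exists
  refine ⟨β, fun a b c d hab hbc hcd hac hbd => ?_, fun v => (hβ v).1, fun v hv => ?_⟩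
  · by_contra hne
    have hgc : g c ∈ β a := hac ▸ (hβ c).2
    have hgd : g d ∈ β b := hbd ▸ (hβ d).2
    rcases h.2 _ (hβ a).1 _ (hβ b).1 hne _ (hβ a).2 _ hgc _ (hβ b).2 _ hgd
      (hg (hab.trans hbc)) (hg (hbc.trans hcd)) with hdisj | hsub | hsub
    · have hmem : g b ∈ Finset.Icc (g a) (g c) ∩ Finset.Icc (g b) (g d) :=
        Finset.mem_inter.2 ⟨Finset.mem_Icc.2 ⟨hg hab, hg hbc⟩,
          Finset.left_mem_Icc.2 (hg (hbc.trans hcd))⟩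
      simp [hdisj] at hmem
    · have hba := (Finset.mem_Icc.1 (hsub (Finset.left_mem_Icc.2 (hg (hab.trans hbc))))).1
      exact hne (h.1.eq_of_mem (hβ a).1 (hβ b).1 (hβ a).2 (hba.antisymm (hg hab) ▸ (hβ b).2))
    · have hdc := (Finset.mem_Icc.1 (hsub (Finset.right_mem_Icc.2 (hg (hbc.trans hcd))))).2
      exact hne (h.1.eq_of_mem (hβ a).1 (hβ b).1 hgc (hdc.antisymm (hg hcd) ▸ hgd))
  · have hgv : g v = v := Nat.findGreatest_eq hv
    simpa only [hgv] using (hβ v).2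

lemma fibersOf_eq {T : List Domino} (hP : IsPartitionOf (Blam ℓ x) P) (hβP : ∀ v, β v ∈ P)
    (hβ : ∀ v ∈ Blam ℓ x, v ∈ β v)
    (hT : ∀ v ∈ Blam ℓ x, ∀ w ∈ Blam ℓ x, clusterMap T v = clusterMap T w ↔ β v = β w) :
    fibersOf ℓ x T = P := by
  have hblock : ∀ v, ∀ w ∈ Blam ℓ x, β w = β v ↔ w ∈ β v := fun v w hw =>
    ⟨fun heq => heq ▸ hβ w hw, fun hwv => hP.eq_of_mem (hβP w) (hβP v) (hβ w hw) hwv⟩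
  have hfiber : ∀ v ∈ Blam ℓ x,
      (Blam ℓ x).filter (fun w => clusterMap T w = clusterMap T v) = β v := fun v hv => by
    ext w
    rw [Finset.mem_filter]
    constructor
    · rintro ⟨hw, heq⟩
      exact (hblock v w hw).1 ((hT w hw v hv).1 heq)
    · intro hwv
      have hw := hP.2.1 _ (hβP v) hwv
      exact ⟨hw, (hT w hw v hv).2 ((hblock v w hw).2 hwv)⟩
  ext L
  rw [fibersOf, Finset.mem_image]
  constructor
  · rintro ⟨v, hv, rfl⟩
    exact (hfiber v hv).symm ▸ hβP v
  · intro hL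
    obtain ⟨v, hv⟩ := hP.1 L hL
    have hvB := hP.2.1 L hL hv
    exact ⟨v, hvB, (hfiber v hvB).trans (hP.eq_of_mem (hβP v) hL (hβ v hvB) hv)⟩

lemma zero_mem_Blam (ℓ : ℕ) (x : ℕ → ℕ) : 0 ∈ Blam ℓ x := Finset.mem_insert_self _ _

lemma two_mul_mem_Blam {j : ℕ} (hj : j ∈ Finset.Icc 1 ℓ) : 2 * x j ∈ Blam ℓ x :=
  Finset.mem_insert_of_mem (Finset.mem_image_of_mem (fun i => 2 * x i) hj)

lemma exists_evenPart_of_mem_Blam (hlam : ∀ j ∈ Finset.Icc 1 ℓ, 2 * x j ∈ lam) {v : ℕ}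
    (hv : v ∈ Blam ℓ x) : ∃ t, v = 2 * t ∧ EvenPart (columnHeight (0 ::ₘ lam)) t := by
  rcases Finset.mem_insert.1 hv with rfl | hv
  · exact ⟨0, rfl, evenPart_columnHeight_iff.2 (Multiset.mem_cons_self 0 lam)⟩
  · obtain ⟨j, hj, rfl⟩ := Finset.mem_image.1 hv
    exact ⟨x j, rfl, evenPart_columnHeight_iff.2 (Multiset.mem_cons_of_mem (hlam j hj))⟩

lemma sum_count_two_mul (hx : StrictAntiOn x (Finset.Icc 1 ℓ))
    (hlam : ∀ j ∈ Finset.Icc 1 ℓ, 2 * x j ∈ lam)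
    (honly : ∀ m ∈ lam, Even m → ∃ j ∈ Finset.Icc 1 ℓ, m = 2 * x j) (p : ℕ → Prop)
    [DecidablePred p] :
    ∑ t ∈ Finset.range (lam.sum + 1) with p t, lam.count (2 * t) =
      ∑ j ∈ Finset.Icc 1 ℓ with p (x j), lam.count (2 * x j) := by
  have hinj : Set.InjOn x ((Finset.Icc 1 ℓ).filter fun j => p (x j)) :=
    hx.injOn.mono (Finset.coe_subset.2 (Finset.filter_subset _ _))
  rw [← Finset.sum_image (f := fun t => lam.count (2 * t)) hinj]
  refine (Finset.sum_subset (fun t ht => ?_) fun t ht htx => ?_).symm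
  · obtain ⟨j, hj, rfl⟩ := Finset.mem_image.1 ht
    obtain ⟨hj, hpj⟩ := Finset.mem_filter.1 hj
    have := Multiset.le_sum_of_mem (hlam j hj)
    exact Finset.mem_filter.2 ⟨Finset.mem_range.2 (by omega), hpj⟩
  · refine Multiset.count_eq_zero_of_notMem fun htlam => htx ?_
    obtain ⟨j, hj, hjt⟩ := honly _ htlam (even_two_mul t)
    obtain rfl : t = x j := by omega
    exact Finset.mem_image_of_mem x (Finset.mem_filter.2 ⟨hj, (Finset.mem_filter.1 ht).2⟩)

lemma IsEvenNCP.isEvenColoring (hP : IsEvenNCP ℓ x r P) (hx : StrictAntiOn x (Finset.Icc 1 ℓ))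
    (hC : IsTypeCShape lam) (hlam : ∀ j ∈ Finset.Icc 1 ℓ, 2 * x j ∈ lam)
    (hcount : ∀ j ∈ Finset.Icc 1 ℓ, lam.count (2 * x j) = r j)
    (honly : ∀ m ∈ lam, Even m → ∃ j ∈ Finset.Icc 1 ℓ, m = 2 * x j)
    (hβ : IsNoncrossingColoring β) (hβP : ∀ v, β v ∈ P) (hmem : ∀ v ∈ Blam ℓ x, v ∈ β v) :
    IsEvenColoring (lam.sum + 1) (columnHeight (0 ::ₘ lam)) fun t => β (2 * t) where
  toIsTypeCHeights := by
    have hodd : ∀ m, Odd m → Even ((0 ::ₘ lam).count m) := fun m hm => by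
      rw [Multiset.count_cons_of_ne hm.pos.ne']
      exact hC.2 m hm
    simpa using isTypeCHeights_columnHeight (Multiset.mem_cons_self 0 lam) hodd
  noncrossing := hβ.comp_monotone fun _ _ hst => Nat.mul_le_mul_left 2 hst
  sum_eq_zero L hL := by
    by_cases hLP : L ∈ P
    · have h0L : 0 ∉ L := fun h0 =>
        hL (hP.1.1.eq_of_mem hLP (hβP 0) h0 (hmem 0 (zero_mem_Blam ℓ x)))
      have hterm : ∀ t, β (2 * t) = L →
          evenMult (columnHeight (0 ::ₘ lam)) t = lam.count (2 * t) := by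
        rintro t rfl
        have ht : 2 * t ≠ 0 := fun ht => hL (by simp [ht])
        rw [evenMult_columnHeight, Multiset.count_cons_of_ne ht]
      have hblock : ∀ j ∈ Finset.Icc 1 ℓ, β (2 * x j) = L ↔ 2 * x j ∈ L := fun j hj =>
        ⟨fun heq => heq ▸ hmem _ (two_mul_mem_Blam hj), fun hjL =>
          hP.1.1.eq_of_mem (hβP _) hLP (hmem _ (two_mul_mem_Blam hj)) hjL⟩
      rw [Finset.sum_congr rfl fun t ht => hterm t (Finset.mem_filter.1 ht).2, ← Nat.cast_sum,
        sum_count_two_mul hx hlam honly, Finset.filter_congr hblock,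
        Finset.sum_congr rfl fun j hj => hcount j (Finset.mem_filter.1 hj).1]
      exact (ZMod.natCast_eq_zero_iff_even).2 (hP.2 L hLP h0L)
    · rw [Finset.filter_false_of_mem fun t _ (heq : β (2 * t) = L) => hLP (heq ▸ hβP _),
        Finset.sum_empty]

end NCP

/-- The surjectivity direction of Theorem 2.6 (proved in Section 3 of the paper): for
every partition `λ` of type C with distinct even parts `2x₁ > … > 2x_ℓ` of
multiplicities `r₁, …, r_ℓ`, and every even NCP `𝓛` of `B_λ = {0, 2x₁, …, 2x_ℓ}`,
there is an admissible domino tableau `T` of type C and shape `λ` whose partition of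
`B_λ` into fibers of `b_T` over the open clusters is exactly `𝓛`. -/
theorem stmt2 (ℓ : ℕ) (x r : ℕ → ℕ)
    (hx : ∀ i ∈ Finset.Icc 1 ℓ, ∀ j ∈ Finset.Icc 1 ℓ, i < j → x j < x i)
    (hxpos : ∀ i ∈ Finset.Icc 1 ℓ, 0 < x i)
    (hr : ∀ i ∈ Finset.Icc 1 ℓ, 0 < r i)
    (lam : Multiset ℕ) (hpos : ∀ m ∈ lam, 0 < m)
    (hC : IsTypeCShape lam)
    (hcount : ∀ i ∈ Finset.Icc 1 ℓ, lam.count (2 * x i) = r i)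
    (honly : ∀ m ∈ lam, Even m → ∃ i ∈ Finset.Icc 1 ℓ, m = 2 * x i)
    (P : Finset (Finset ℕ)) (hP : IsEvenNCP ℓ x r P) :
    ∃ T : List Domino, IsAdmissibleC T ∧ shapeOf T = lam ∧ fibersOf ℓ x T = P := by
  have hlam : ∀ j ∈ Finset.Icc 1 ℓ, 2 * x j ∈ lam := fun j hj =>
    Multiset.count_pos.1 ((hr j hj).trans_eq (hcount j hj).symm)
  have hanti : StrictAntiOn x (Finset.Icc 1 ℓ) := fun i hi j hj => hx i hi j hj
  obtain ⟨β, hβ, hβP, hmem⟩ := hP.1.exists_coloring (zero_mem_Blam ℓ x)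
  have heven := hP.isEvenColoring hanti hC hlam hcount honly hβ hβP hmem
  obtain ⟨T, hT⟩ := heven.exists_realizes
  refine ⟨T, hT.admissible, hT.fills.shapeOf_eq heven.antitone fun h0 => (hpos 0 h0).false,
    fibersOf_eq hP.1.1 hβP hmem fun v hv w hw => ?_⟩
  obtain ⟨s, rfl, hs⟩ := exists_evenPart_of_mem_Blam hlam hv
  obtain ⟨t, rfl, ht⟩ := exists_evenPart_of_mem_Blam hlam hw
  exact hT.clusterMap_eq_iff s t hs ht
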